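/- arXiv:2205.13794 — 19 statements merged into one kernel-verified Lean document; each statement's English description precedes it below -/
import Mathlib

section
/- Let R be a commutative ring, M an R-module, and a ∈ R. Then M is a-morphic if and only if there exists an R-module endomorphism ψ of M such that aM = ker(ψ) and Ann_M(a) = ψ(M). -/
/-- `M` is `a`-morphic if `M/aM ≅ Ann_M(a)` as `R`-modules, where `aM` is the image and
`Ann_M(a)` the kernel of the multiplication-by-`a` endomorphism of `M`. -/
def IsAMorphic (R : Type*) [CommRing R] (M : Type*) [AddCommGroup M] [Module R M] (a : R) : Prop :=
  Nonempty ((M ⧸ LinearMap.range (LinearMap.lsmul R M a)) ≃ₗ[R]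
    LinearMap.ker (LinearMap.lsmul R M a))

/-- `M` is weakly-morphic if it is `a`-morphic for every `a ∈ R`. -/
def IsWeaklyMorphic (R : Type*) [CommRing R] (M : Type*) [AddCommGroup M] [Module R M] : Prop :=
  ∀ a : R, IsAMorphic R M a

theorem stmt_0 (R : Type*) [CommRing R] (M : Type*) [AddCommGroup M] [Module R M] (a : R) :
    IsAMorphic R M a ↔
      ∃ ψ : M →ₗ[R] M,
        LinearMap.range (LinearMap.lsmul R M a) = LinearMap.ker ψ ∧
        LinearMap.ker (LinearMap.lsmul R M a) = LinearMap.range ψ := by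
  constructor
  · rintro ⟨e⟩
    refine ⟨(LinearMap.ker (LinearMap.lsmul R M a)).subtype ∘ₗ e.toLinearMap ∘ₗ
      (LinearMap.range (LinearMap.lsmul R M a)).mkQ, ?_, ?_⟩
    · rw [LinearMap.ker_comp_of_ker_eq_bot _ (Submodule.ker_subtype _),
        LinearMap.ker_comp_of_ker_eq_bot _ e.ker, Submodule.ker_mkQ]
    · rw [LinearMap.range_comp, LinearMap.range_comp, Submodule.range_mkQ,
        Submodule.map_top, LinearEquiv.range, Submodule.map_top, Submodule.range_subtype]
  · rintro ⟨ψ, h1, h2⟩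
    exact ⟨(Submodule.quotEquivOfEq _ _ h1).trans
      (ψ.quotKerEquivRange.trans (LinearEquiv.ofEq _ _ h2.symm))⟩
end

section
/- Let R be a commutative ring, a ∈ R, and let M be an a-morphic R-module. Then the following are equivalent: (1) Ann_M(a) = 0; (2) aM = M; (3) the multiplication endomorphism φ_a is an automorphism of M (i.e. bijective). -/
theorem stmt_1 (R : Type*) [CommRing R] (M : Type*) [AddCommGroup M] [Module R M] (a : R)
    (h : IsAMorphic R M a) :
    List.TFAE [LinearMap.ker (LinearMap.lsmul R M a) = ⊥,
      LinearMap.range (LinearMap.lsmul R M a) = ⊤,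
      Function.Bijective (LinearMap.lsmul R M a)] := by
  obtain ⟨e⟩ := h
  have key : LinearMap.ker (LinearMap.lsmul R M a) = ⊥ ↔
      LinearMap.range (LinearMap.lsmul R M a) = ⊤ := by
    rw [← Submodule.subsingleton_iff_eq_bot, ← Submodule.Quotient.subsingleton_iff]
    exact e.toEquiv.subsingleton_congr.symm
  tfae_have 1 ↔ 2 := key
  tfae_have 1 → 3 := fun h1 =>
    ⟨LinearMap.ker_eq_bot.mp h1, LinearMap.range_eq_top.mp (key.mp h1)⟩
  tfae_have 3 → 1 := fun h3 => LinearMap.ker_eq_bot.mpr h3.1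
  tfae_finish
end

section
/- Let R be an Artinian commutative ring, M an R-module, and a ∈ R. If Ann_M(a) = 0, then M is a-morphic; likewise, if aM = M, then M is a-morphic. (In either case the multiplication endomorphism φ_a is in fact an automorphism of M.) -/
theorem aMorphic_of_bijective_aux (R : Type*) [CommRing R] (M : Type*) [AddCommGroup M]
    [Module R M] (a : R) (hk : LinearMap.ker (LinearMap.lsmul R M a) = ⊥)
    (hr : LinearMap.range (LinearMap.lsmul R M a) = ⊤) :
    IsAMorphic R M a ∧ Function.Bijective (LinearMap.lsmul R M a) := by
  refine ⟨?_, LinearMap.ker_eq_bot.1 hk, LinearMap.range_eq_top.1 hr⟩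
  unfold IsAMorphic
  rw [hk, hr]
  exact ⟨LinearEquiv.ofSubsingleton _ _⟩

theorem stmt_2 (R : Type*) [CommRing R] [IsArtinianRing R]
    (M : Type*) [AddCommGroup M] [Module R M] (a : R) :
    (LinearMap.ker (LinearMap.lsmul R M a) = ⊥ →
      IsAMorphic R M a ∧ Function.Bijective (LinearMap.lsmul R M a)) ∧
    (LinearMap.range (LinearMap.lsmul R M a) = ⊤ →
      IsAMorphic R M a ∧ Function.Bijective (LinearMap.lsmul R M a)) := by
  obtain ⟨n, b, hb⟩ := IsArtinian.exists_pow_succ_smul_dvd a (1 : R)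
  simp only [smul_eq_mul, mul_one, Nat.succ_eq_add_one] at hb
  constructor
  · intro hk
    refine aMorphic_of_bijective_aux R M a hk ?_
    have hinj : ∀ m : M, a • m = 0 → m = 0 := fun m hm => by
      have : m ∈ LinearMap.ker (LinearMap.lsmul R M a) := by simpa using hm
      rw [hk] at this
      simpa using this
    have hpow : ∀ (k : ℕ) (m : M), a ^ k • m = 0 → m = 0 := by
      intro k
      induction k with
      | zero => intro m hm; simpa using hm
      | succ k ih =>
        intro m hm
        rw [pow_succ, mul_smul] at hm
        exact hinj _ (ih _ hm)
    rw [LinearMap.range_eq_top]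
    intro m
    refine ⟨b • m, ?_⟩
    rw [LinearMap.lsmul_apply, ← sub_eq_zero]
    apply hpow n
    rw [smul_sub, smul_smul, smul_smul, ← pow_succ, hb, sub_self]
  · intro hr
    refine aMorphic_of_bijective_aux R M a ?_ hr
    have hs : ∀ m : M, ∃ z : M, a • z = m := fun m => by
      obtain ⟨z, hz⟩ := LinearMap.range_eq_top.1 hr m
      exact ⟨z, by simpa using hz⟩
    have hpow : ∀ (k : ℕ) (m : M), ∃ z : M, a ^ k • z = m := by
      intro k
      induction k with
      | zero => intro m; exact ⟨m, by simp⟩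
      | succ k ih =>
        intro m
        obtain ⟨y, hy⟩ := ih m
        obtain ⟨z, hz⟩ := hs y
        exact ⟨z, by rw [pow_succ, mul_smul, hz, hy]⟩
    rw [LinearMap.ker_eq_bot']
    intro x hx
    rw [LinearMap.lsmul_apply] at hx
    obtain ⟨z, rfl⟩ := hpow n x
    rw [smul_smul, ← pow_succ'] at hx
    rw [← hb, mul_comm, mul_smul, hx, smul_zero]
end

section
/- Let R be a Noetherian commutative ring. Then the following are equivalent: (1) R is Artinian; (2) for every R-module M and every a ∈ R with Ann_M(a) = 0, the module M is a-morphic; (3) for every R-module M and every a ∈ R with aM = M, the module M is a-morphic. -/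
universe u

theorem aMorphic_of_both {R : Type*} [CommRing R] {M : Type*} [AddCommGroup M] [Module R M] {a : R}
    (h1 : LinearMap.range (LinearMap.lsmul R M a) = ⊤)
    (h2 : LinearMap.ker (LinearMap.lsmul R M a) = ⊥) : IsAMorphic R M a := by
  have : Subsingleton (M ⧸ LinearMap.range (LinearMap.lsmul R M a)) :=
    Submodule.Quotient.subsingleton_iff.2 h1
  have : Subsingleton (LinearMap.ker (LinearMap.lsmul R M a)) :=
    Submodule.subsingleton_iff_eq_bot.2 h2
  exact ⟨⟨0, 0, fun _ => Subsingleton.elim _ _, fun _ => Subsingleton.elim _ _⟩⟩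

theorem aMorphic_iff {R : Type*} [CommRing R] {M : Type*} [AddCommGroup M] [Module R M] {a : R}
    (h : IsAMorphic R M a) : LinearMap.range (LinearMap.lsmul R M a) = ⊤ ↔
      LinearMap.ker (LinearMap.lsmul R M a) = ⊥ := by
  obtain ⟨e⟩ := h
  rw [← Submodule.Quotient.subsingleton_iff, ← Submodule.subsingleton_iff_eq_bot]
  exact e.toEquiv.subsingleton_congr

theorem artinian_pow {R : Type*} [CommRing R] [IsArtinianRing R] (a : R) :
    ∃ (n : ℕ) (b : R), a ^ n = b * a ^ (n + 1) := by
  obtain ⟨n, y, h⟩ := IsArtinian.exists_pow_succ_smul_dvd a (1 : R)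
  refine ⟨n, y, ?_⟩
  simp only [smul_eq_mul, mul_one, Nat.succ_eq_add_one] at h
  rw [mul_comm, h]

theorem isArtinian_of_unit {R : Type*} [CommRing R] [IsNoetherianRing R]
    (h : ∀ (p : Ideal R) [p.IsPrime] (a : R), a ∉ p → ∃ b, 1 - a * b ∈ p) :
    IsArtinianRing R := by
  rw [isArtinianRing_iff_krullDimLE_zero]
  refine Ring.krullDimLE_zero_iff.2 fun p hp => ?_
  rw [Ideal.isMaximal_iff]
  refine ⟨(Ideal.ne_top_iff_one p).1 hp.ne_top, fun J a hpJ hap haJ => ?_⟩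
  obtain ⟨b, hb⟩ := h p a hap
  have := J.add_mem (hpJ hb) (J.mul_mem_right b haJ)
  simpa using this

theorem stmt_3 (R : Type u) [CommRing R] [IsNoetherianRing R] :
    List.TFAE [IsArtinianRing R,
      ∀ (M : Type u) [AddCommGroup M] [Module R M] (a : R),
        LinearMap.ker (LinearMap.lsmul R M a) = ⊥ → IsAMorphic R M a,
      ∀ (M : Type u) [AddCommGroup M] [Module R M] (a : R),
        LinearMap.range (LinearMap.lsmul R M a) = ⊤ → IsAMorphic R M a] := by
  tfae_have 1 → 2 := by
    intro _ M _ _ a hk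
    refine aMorphic_of_both ?_ hk
    obtain ⟨n, b, hn⟩ := artinian_pow a
    have key : ∀ (k : ℕ) (x : M), a ^ k • x = 0 → x = 0 := by
      intro k
      induction k with
      | zero => intro x hx; simpa using hx
      | succ k ih =>
        intro x hx
        apply ih
        apply LinearMap.ker_eq_bot'.1 hk
        rw [LinearMap.lsmul_apply, smul_smul, ← pow_succ', hx]
    rw [LinearMap.range_eq_top]
    intro m
    refine ⟨b • m, ?_⟩
    rw [LinearMap.lsmul_apply, ← sub_eq_zero]
    apply key n
    rw [smul_sub, smul_smul, smul_smul, sub_eq_zero]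
    congr 1
    linear_combination -hn
  tfae_have 1 → 3 := by
    intro _ M _ _ a hs
    refine aMorphic_of_both hs ?_
    obtain ⟨n, b, hn⟩ := artinian_pow a
    have key : ∀ (k : ℕ) (x : M), ∃ y, a ^ k • y = x := by
      intro k
      induction k with
      | zero => intro x; exact ⟨x, by simp⟩
      | succ k ih =>
        intro x
        obtain ⟨y, hy⟩ := ih x
        obtain ⟨z, hz⟩ := LinearMap.range_eq_top.1 hs y
        refine ⟨z, ?_⟩
        rw [LinearMap.lsmul_apply] at hz
        rw [pow_succ, mul_smul, hz, hy]
    rw [LinearMap.ker_eq_bot']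
    intro m hm
    obtain ⟨y, rfl⟩ := key n m
    rw [LinearMap.lsmul_apply, smul_smul, ← pow_succ'] at hm
    rw [hn, mul_smul, hm, smul_zero]
  tfae_have 2 → 1 := by
    intro h
    refine isArtinian_of_unit fun p _ a ha => ?_
    have hk : LinearMap.ker (LinearMap.lsmul R (R ⧸ p) a) = ⊥ := by
      rw [LinearMap.ker_eq_bot']
      intro m hm
      rw [LinearMap.lsmul_apply, Algebra.smul_def, mul_eq_zero] at hm
      refine hm.resolve_left fun h0 => ha ?_
      exact Ideal.Quotient.eq_zero_iff_mem.1 h0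
    obtain ⟨y, hy⟩ := LinearMap.range_eq_top.1 ((aMorphic_iff (h (R ⧸ p) a hk)).2 hk) 1
    obtain ⟨b, rfl⟩ := Ideal.Quotient.mk_surjective y
    refine ⟨b, ?_⟩
    rw [← Ideal.Quotient.eq_zero_iff_mem, map_sub, map_mul, map_one, sub_eq_zero, ← hy]
    rfl
  tfae_have 3 → 1 := by
    intro h
    refine isArtinian_of_unit fun p _ a ha => ?_
    let K := FractionRing (R ⧸ p)
    let N : Submodule R K := LinearMap.range (Algebra.linearMap R K)
    have haK : algebraMap R K a ≠ 0 := by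
      rw [IsScalarTower.algebraMap_apply R (R ⧸ p) K]
      intro h0
      apply ha
      apply Ideal.Quotient.eq_zero_iff_mem.1
      exact (IsFractionRing.to_map_eq_zero_iff (K := K)).1 h0
    have hs : LinearMap.range (LinearMap.lsmul R (K ⧸ N) a) = ⊤ := by
      rw [LinearMap.range_eq_top]
      intro m
      obtain ⟨x, rfl⟩ := N.mkQ_surjective m
      refine ⟨N.mkQ ((algebraMap R K a)⁻¹ * x), ?_⟩
      rw [LinearMap.lsmul_apply, ← map_smul, Algebra.smul_def, mul_inv_cancel_left₀ haK]
    have hk := (aMorphic_iff (h (K ⧸ N) a hs)).1 hs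
    have h0 : N.mkQ (algebraMap R K a)⁻¹ = 0 := by
      apply LinearMap.ker_eq_bot'.1 hk
      rw [LinearMap.lsmul_apply, ← map_smul, Algebra.smul_def, mul_inv_cancel₀ haK]
      rw [Submodule.mkQ_apply, Submodule.Quotient.mk_eq_zero]
      exact ⟨1, by simp⟩
    rw [Submodule.mkQ_apply, Submodule.Quotient.mk_eq_zero] at h0
    obtain ⟨b, hb⟩ := h0
    rw [Algebra.linearMap_apply] at hb
    refine ⟨b, ?_⟩
    have h1 : algebraMap R K (1 - a * b) = 0 := by
      rw [map_sub, map_mul, map_one, hb, mul_inv_cancel₀ haK, sub_self]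
    rw [IsScalarTower.algebraMap_apply R (R ⧸ p) K] at h1
    exact Ideal.Quotient.eq_zero_iff_mem.1 ((IsFractionRing.to_map_eq_zero_iff (K := K)).1 h1)
  tfae_finish
end

section
/- Let R be a commutative ring and M an R-module. Then M is weakly-morphic if and only if for every multiplicative submonoid D ⊆ R, the localized module M_D is a weakly-morphic module over the localized ring R_D. -/
open IsLocalizedModule in
theorem lsmul_map_eq (R : Type*) [CommRing R] (M : Type*) [AddCommGroup M] [Module R M]
    (D : Submonoid R) (r : R) :
    (map D (LocalizedModule.mkLinearMap D M) (LocalizedModule.mkLinearMap D M)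
      (LinearMap.lsmul R M r)).extendScalarsOfIsLocalization D (Localization D) =
    LinearMap.lsmul (Localization D) (LocalizedModule D M) (algebraMap R (Localization D) r) := by
  ext x
  obtain ⟨⟨m, s⟩, rfl⟩ := mk'_surjective D (LocalizedModule.mkLinearMap D M) x
  simp only [LinearMap.extendScalarsOfIsLocalization_apply', Function.uncurry_apply_pair, map_mk',
    LinearMap.lsmul_apply, algebraMap_smul, mk'_smul]

theorem ker_loc (R : Type*) [CommRing R] (M : Type*) [AddCommGroup M] [Module R M]
    (D : Submonoid R) (r : R) :
    (LinearMap.ker (LinearMap.lsmul R M r)).localized D =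
    LinearMap.ker (LinearMap.lsmul (Localization D) (LocalizedModule D M)
      (algebraMap R (Localization D) r)) := by
  rw [← lsmul_map_eq]
  exact LinearMap.localized'_ker_eq_ker_localizedMap _ _ _ _ _

theorem range_loc (R : Type*) [CommRing R] (M : Type*) [AddCommGroup M] [Module R M]
    (D : Submonoid R) (r : R) :
    (LinearMap.range (LinearMap.lsmul R M r)).localized D =
    LinearMap.range (LinearMap.lsmul (Localization D) (LocalizedModule D M)
      (algebraMap R (Localization D) r)) := by
  rw [← lsmul_map_eq]
  exact LinearMap.localized'_range_eq_range_localizedMap _ _ _ _ _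

theorem isAMorphic_unit_mul {R : Type*} [CommRing R] {M : Type*} [AddCommGroup M] [Module R M]
    {a b u : R} (hu : IsUnit u) (h : a * u = b) (H : IsAMorphic R M b) : IsAMorphic R M a := by
  obtain ⟨u, rfl⟩ := hu
  have h1 : LinearMap.ker (LinearMap.lsmul R M b) = LinearMap.ker (LinearMap.lsmul R M a) := by
    ext x
    simp only [LinearMap.mem_ker, LinearMap.lsmul_apply, ← h]
    rw [mul_comm, mul_smul]
    exact smul_eq_zero_iff_eq u
  have h2 : LinearMap.range (LinearMap.lsmul R M b) =
      LinearMap.range (LinearMap.lsmul R M a) := by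
    ext x
    simp only [LinearMap.mem_range, LinearMap.lsmul_apply, ← h]
    constructor
    · rintro ⟨y, rfl⟩
      exact ⟨(u : R) • y, by rw [mul_smul]⟩
    · rintro ⟨y, rfl⟩
      exact ⟨((u⁻¹ : Rˣ) : R) • y, by rw [smul_smul, mul_assoc, Units.mul_inv, mul_one]⟩
  unfold IsAMorphic at *
  rwa [h1, h2] at H

theorem isAMorphic_loc_iff (R : Type*) [CommRing R] (M : Type*) [AddCommGroup M] [Module R M]
    (D : Submonoid R) (r : R) :
    IsAMorphic (Localization D) (LocalizedModule D M) (algebraMap R (Localization D) r) ↔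
    Nonempty ((LocalizedModule D M ⧸ (LinearMap.range (LinearMap.lsmul R M r)).localized D)
      ≃ₗ[Localization D] (LinearMap.ker (LinearMap.lsmul R M r)).localized D) := by
  unfold IsAMorphic
  rw [ker_loc, range_loc]

theorem isLocalizedModule_bot_id (R : Type*) [CommRing R] (M : Type*) [AddCommGroup M]
    [Module R M] : IsLocalizedModule (⊥ : Submonoid R) (LinearMap.id : M →ₗ[R] M) :=
  have : IsLocalization (⊥ : Submonoid R) R := 
    IsLocalization.of_le_isUnit (by simp)
  isLocalizedModule_id (⊥ : Submonoid R) M R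

theorem stmt_4 (R : Type*) [CommRing R] (M : Type*) [AddCommGroup M] [Module R M] :
    IsWeaklyMorphic R M ↔
      ∀ D : Submonoid R, IsWeaklyMorphic (Localization D) (LocalizedModule D M) := by
  constructor
  · intro H D a
    obtain ⟨⟨r, s⟩, hs⟩ := IsLocalization.surj D a
    refine isAMorphic_unit_mul (IsLocalization.map_units _ s) hs ?_
    rw [isAMorphic_loc_iff]
    obtain ⟨e⟩ := H r
    have h := IsLocalizedModule.of_linearEquiv_right D
      ((LinearMap.ker (LinearMap.lsmul R M r)).toLocalized D) e
    exact ⟨(IsLocalizedModule.linearEquiv D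
      ((LinearMap.range (LinearMap.lsmul R M r)).toLocalizedQuotient D)
      ((LinearMap.ker (LinearMap.lsmul R M r)).toLocalized D ∘ₗ
        e.toLinearMap)).extendScalarsOfIsLocalization D (Localization D)⟩
  · intro H r
    obtain ⟨e⟩ := (isAMorphic_loc_iff R M ⊥ r).1 (H ⊥ _)
    have h1 := isLocalizedModule_bot_id R (M ⧸ LinearMap.range (LinearMap.lsmul R M r))
    have h2 := isLocalizedModule_bot_id R (LinearMap.ker (LinearMap.lsmul R M r))
    exact ⟨(IsLocalizedModule.linearEquiv ⊥ LinearMap.id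
      ((LinearMap.range (LinearMap.lsmul R M r)).toLocalizedQuotient ⊥)).trans
      ((e.restrictScalars R).trans (IsLocalizedModule.linearEquiv ⊥
      ((LinearMap.ker (LinearMap.lsmul R M r)).toLocalized ⊥) LinearMap.id))⟩
end

section
/- Let R be a commutative ring and {M_i}_{i∈I} a nonempty family of R-modules. If every M_i is a weakly-morphic R-module, then the direct product ∏_{i∈I} M_i is a weakly-morphic R-module. -/
theorem stmt_5 (R : Type*) [CommRing R] (I : Type*) [Nonempty I]
    (M : I → Type*) [∀ i, AddCommGroup (M i)] [∀ i, Module R (M i)]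
    (h : ∀ i, IsWeaklyMorphic R (M i)) :
    IsWeaklyMorphic R (∀ i, M i) := by
  intro a
  let e := fun i => Classical.choice (h i a)
  let f : (∀ i, M i) →ₗ[R] LinearMap.ker (LinearMap.lsmul R (∀ i, M i) a) :=
    LinearMap.codRestrict _
      (LinearMap.pi fun i => (LinearMap.ker (LinearMap.lsmul R (M i) a)).subtype ∘ₗ
        (e i).toLinearMap ∘ₗ (LinearMap.range (LinearMap.lsmul R (M i) a)).mkQ ∘ₗ
          LinearMap.proj i)
      (by
        intro x
        rw [LinearMap.mem_ker]
        funext i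
        exact (e i (Submodule.Quotient.mk (x i))).2)
  have hf : ∀ x i, (f x : ∀ i, M i) i = (e i (Submodule.Quotient.mk (x i)) : M i) :=
    fun x i => rfl
  have hsurj : Function.Surjective f := by
    rintro ⟨y, hy⟩
    have hy' : ∀ i, y i ∈ LinearMap.ker (LinearMap.lsmul R (M i) a) := fun i =>
      congrFun (LinearMap.mem_ker.1 hy) i
    choose x hx using fun i => Submodule.Quotient.mk_surjective _ ((e i).symm ⟨y i, hy' i⟩)
    refine ⟨x, Subtype.ext (funext fun i => ?_)⟩
    rw [hf, hx, LinearEquiv.apply_symm_apply]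
  have hker : LinearMap.range (LinearMap.lsmul R (∀ i, M i) a) = LinearMap.ker f := by
    ext x
    have h1 : x ∈ LinearMap.ker f ↔ ∀ i, x i ∈ LinearMap.range (LinearMap.lsmul R (M i) a) := by
      rw [LinearMap.mem_ker, Subtype.ext_iff, funext_iff]
      refine forall_congr' fun i => ?_
      rw [hf, ← Submodule.Quotient.mk_eq_zero, ← (e i).map_eq_zero_iff, Subtype.ext_iff]
      rfl
    rw [h1]
    constructor
    · rintro ⟨y, rfl⟩ i
      exact ⟨y i, rfl⟩
    · intro hx
      choose y hy using hx
      exact ⟨y, funext hy⟩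
  exact ⟨(Submodule.quotEquivOfEq _ _ hker).trans (f.quotKerEquivOfSurjective hsurj)⟩
end

section
/- Let R be a commutative ring and {M_i}_{i∈I} a nonempty family of R-modules. If every M_i is a weakly-morphic R-module, then the direct sum ⊕_{i∈I} M_i is a weakly-morphic R-module. -/
theorem isAMorphic_iff_exists_endo (R : Type*) [CommRing R] (M : Type*) [AddCommGroup M]
    [Module R M] (a : R) : IsAMorphic R M a ↔ ∃ g : M →ₗ[R] M,
      LinearMap.ker g = LinearMap.range (LinearMap.lsmul R M a) ∧
      LinearMap.range g = LinearMap.ker (LinearMap.lsmul R M a) := by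
  constructor
  · rintro ⟨e⟩
    refine ⟨(Submodule.subtype _) ∘ₗ e.toLinearMap ∘ₗ Submodule.mkQ _, ?_, ?_⟩
    · ext x
      simp only [LinearMap.mem_ker, LinearMap.comp_apply, Submodule.subtype_apply,
        LinearEquiv.coe_coe, ZeroMemClass.coe_eq_zero, LinearEquiv.map_eq_zero_iff,
        Submodule.mkQ_apply, Submodule.Quotient.mk_eq_zero]
    · rw [LinearMap.range_comp, LinearMap.range_comp, Submodule.range_mkQ, Submodule.map_top,
        LinearEquiv.range, Submodule.map_top, Submodule.range_subtype]
  · rintro ⟨g, hk, hr⟩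
    exact ⟨(Submodule.quotEquivOfEq _ _ hk.symm).trans
      (g.quotKerEquivRange.trans (LinearEquiv.ofEq _ _ hr))⟩

theorem stmt_6 (R : Type*) [CommRing R] (I : Type*) [Nonempty I] [DecidableEq I]
    (M : I → Type*) [∀ i, AddCommGroup (M i)] [∀ i, Module R (M i)]
    (h : ∀ i, IsWeaklyMorphic R (M i)) :
    IsWeaklyMorphic R (DirectSum I M) := by
  intro a
  choose g hk hr using fun i => (isAMorphic_iff_exists_endo R (M i) a).1 (h i a)
  have hl : LinearMap.lsmul R (DirectSum I M) a =
      DirectSum.lmap (fun i => LinearMap.lsmul R (M i) a) := by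
    ext i x j
    simp [DirectSum.lmap_lof]
  refine (isAMorphic_iff_exists_endo R _ a).2 ⟨DirectSum.lmap g, ?_, ?_⟩
  · rw [hl, DirectSum.ker_lmap, DirectSum.range_lmap]
    simp only [hk]
  · rw [hl, DirectSum.ker_lmap, DirectSum.range_lmap]
    simp only [hr]
end

section
/- Let R be a commutative ring and {M_i}_{i∈I} a family of R-modules satisfying Hom_R(M_i, M_j) = 0 for all i ≠ j, and let M = ⊕_{i∈I} M_i. Then M is weakly-morphic if and only if M_i is weakly-morphic for every i ∈ I. -/
theorem isAMorphic_iff_endo (R : Type*) [CommRing R] (M : Type*) [AddCommGroup M] [Module R M]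
    (a : R) : IsAMorphic R M a ↔ ∃ f : M →ₗ[R] M,
      (∀ y, a • y = 0 ↔ ∃ x, f x = y) ∧ (∀ x, f x = 0 ↔ ∃ y, a • y = x) := by
  constructor
  · rintro ⟨e⟩
    refine ⟨(LinearMap.ker (LinearMap.lsmul R M a)).subtype ∘ₗ e.toLinearMap ∘ₗ
      (LinearMap.range (LinearMap.lsmul R M a)).mkQ, fun y => ⟨fun h => ?_, ?_⟩, fun x => ?_⟩
    · obtain ⟨x, hx⟩ := Submodule.mkQ_surjective _ (e.symm ⟨y, by simpa using h⟩)
      exact ⟨x, by simp only [LinearMap.comp_apply, hx]; simp⟩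
    · rintro ⟨x, rfl⟩
      exact (e ((LinearMap.range (LinearMap.lsmul R M a)).mkQ x)).2
    · have : x ∈ LinearMap.range (LinearMap.lsmul R M a) ↔ ∃ y, a • y = x := by
        simp [LinearMap.mem_range]
      rw [← this]
      simp only [LinearMap.comp_apply, Submodule.subtype_apply, LinearEquiv.coe_coe,
        ZeroMemClass.coe_eq_zero, LinearEquiv.map_eq_zero_iff, Submodule.mkQ_apply,
        Submodule.Quotient.mk_eq_zero]
  · rintro ⟨f, h1, h2⟩
    have hr : LinearMap.range (LinearMap.lsmul R M a) = LinearMap.ker f := by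
      ext x; simp [h2]
    have hk : LinearMap.range f = LinearMap.ker (LinearMap.lsmul R M a) := by
      ext x; simp [h1]
    exact ⟨(Submodule.quotEquivOfEq _ _ hr).trans
      (f.quotKerEquivRange.trans (LinearEquiv.ofEq _ _ hk))⟩

theorem directSum_lift_aux {R : Type*} [CommRing R] {I : Type*} [DecidableEq I]
    {M : I → Type*} [∀ i, AddCommGroup (M i)] [∀ i, Module R (M i)]
    (f : ∀ i, M i →ₗ[R] M i) (y : DirectSum I M) (h : ∀ i, ∃ x, f i x = y i) :
    ∃ x : DirectSum I M, ∀ i, f i (x i) = y i := by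
  classical
  choose g hg using h
  refine ⟨DFinsupp.mk (DFinsupp.support y) (fun i => g i), fun i => ?_⟩
  by_cases hi : i ∈ DFinsupp.support y
  · rw [DFinsupp.mk_of_mem hi]; exact hg i
  · rw [DFinsupp.mk_of_notMem hi, map_zero]
    exact (DFinsupp.notMem_support_iff.mp hi).symm

theorem directSum_diag_aux {R : Type*} [CommRing R] {I : Type*} [DecidableEq I]
    {M : I → Type*} [∀ i, AddCommGroup (M i)] [∀ i, Module R (M i)]
    (hhom : ∀ i j, i ≠ j → ∀ f : M i →ₗ[R] M j, f = 0)
    (f : DirectSum I M →ₗ[R] DirectSum I M) (i : I) (x : DirectSum I M) :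
    f x i = f (DirectSum.lof R I M i (x i)) i := by
  have : DirectSum.component R I M i ∘ₗ f =
      DirectSum.component R I M i ∘ₗ f ∘ₗ DirectSum.lof R I M i ∘ₗ
        DirectSum.component R I M i := by
    refine DirectSum.linearMap_ext R fun j => ?_
    by_cases hj : j = i
    · subst hj
      ext m
      simp [DirectSum.component.lof_self]
    · rw [hhom j i hj (_ ∘ₗ DirectSum.lof R I M j), hhom j i hj (_ ∘ₗ DirectSum.lof R I M j)]
  exact LinearMap.congr_fun this x

theorem stmt_7 (R : Type*) [CommRing R] (I : Type*) [DecidableEq I]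
    (M : I → Type*) [∀ i, AddCommGroup (M i)] [∀ i, Module R (M i)]
    (hhom : ∀ i j, i ≠ j → ∀ f : M i →ₗ[R] M j, f = 0) :
    IsWeaklyMorphic R (DirectSum I M) ↔ ∀ i, IsWeaklyMorphic R (M i) := by
  constructor
  · intro h i a
    obtain ⟨f, h1, h2⟩ := (isAMorphic_iff_endo _ _ _).1 (h a)
    have hd := directSum_diag_aux hhom f
    have hs : ∀ m : M i, (DirectSum.lof R I M i m) i = m := fun m => DirectSum.of_eq_same i m
    have hn : ∀ (m : M i) j, j ≠ i → (DirectSum.lof R I M i m) j = 0 :=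
      fun m j hj => DirectSum.of_eq_of_ne i j m hj
    refine (isAMorphic_iff_endo _ _ _).2
      ⟨DirectSum.component R I M i ∘ₗ f ∘ₗ DirectSum.lof R I M i, fun y => ?_, fun x => ?_⟩
    · change _ ↔ ∃ x, f (DirectSum.lof R I M i x) i = y
      constructor
      · intro hy
        obtain ⟨x, hx⟩ := (h1 (DirectSum.lof R I M i y)).1 (by rw [← map_smul, hy, map_zero])
        exact ⟨x i, by rw [← hd, hx, hs]⟩
      · rintro ⟨x, rfl⟩
        have := (h1 _).2 ⟨DirectSum.lof R I M i x, rfl⟩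
        exact congrArg (fun z : DirectSum I M => z i) this
    · change f (DirectSum.lof R I M i x) i = 0 ↔ _
      constructor
      · intro hx
        obtain ⟨y, hy⟩ := (h2 (DirectSum.lof R I M i x)).1 (by
          refine DFinsupp.ext fun j => ?_
          by_cases hj : j = i
          · subst hj; exact hx
          · refine (hd j _).trans ?_
            rw [hn x j hj, map_zero, map_zero])
        exact ⟨y i, by rw [← hs x, ← hy]; rfl⟩
      · rintro ⟨y, rfl⟩
        rw [(h2 _).2 ⟨DirectSum.lof R I M i y, (map_smul _ _ _).symm⟩]; rfl
  · intro h a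
    choose f h1 h2 using fun i => (isAMorphic_iff_endo _ _ _).1 (h i a)
    refine (isAMorphic_iff_endo _ _ _).2
      ⟨DFinsupp.mapRange.linearMap f, fun y => ?_, fun x => ?_⟩
    · constructor
      · intro hy
        obtain ⟨x, hx⟩ := directSum_lift_aux f y
          fun i => (h1 i _).1 (congrArg (fun z : DirectSum I M => z i) hy)
        exact ⟨x, DFinsupp.ext hx⟩
      · rintro ⟨x, rfl⟩
        exact DFinsupp.ext fun i => (h1 i _).2 ⟨x i, rfl⟩
    · constructor
      · intro hx
        obtain ⟨y, hy⟩ := directSum_lift_aux (fun i => LinearMap.lsmul R (M i) a) x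
          fun i => (h2 i _).1 (congrArg (fun z : DirectSum I M => z i) hx)
        exact ⟨y, DFinsupp.ext hy⟩
      · rintro ⟨y, rfl⟩
        exact DFinsupp.ext fun i => (h2 i _).2 ⟨y i, rfl⟩
end

section
/- Let R₁ and R₂ be commutative rings, M₁ an R₁-module and M₂ an R₂-module. Then M₁ × M₂, viewed as a module over the product ring R₁ × R₂ with componentwise action, is weakly-morphic if and only if M₁ is a weakly-morphic R₁-module and M₂ is a weakly-morphic R₂-module. -/
section

variable (R₁ R₂ : Type*) [CommRing R₁] [CommRing R₂]
variable (M₁ M₂ : Type*) [AddCommGroup M₁] [Module R₁ M₁] [AddCommGroup M₂] [Module R₂ M₂]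

/-- The componentwise action of the product ring `R₁ × R₂` on `M₁ × M₂`:
`(m₁, m₂) • (a₁, a₂) = (m₁ • a₁, m₂ • a₂)`. -/
instance Prod.moduleProd : Module (R₁ × R₂) (M₁ × M₂) where
  smul a m := (a.1 • m.1, a.2 • m.2)
  one_smul m := Prod.ext (one_smul _ _) (one_smul _ _)
  mul_smul a b m := Prod.ext (mul_smul _ _ _) (mul_smul _ _ _)
  smul_zero a := Prod.ext (smul_zero _) (smul_zero _)
  smul_add a m n := Prod.ext (smul_add _ _ _) (smul_add _ _ _)
  add_smul a b m := Prod.ext (add_smul _ _ _) (add_smul _ _ _)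
  zero_smul m := Prod.ext (zero_smul _ _) (zero_smul _ _)

theorem isAMorphic_iff_aux (R : Type*) [CommRing R] (M : Type*) [AddCommGroup M] [Module R M]
    (a : R) : IsAMorphic R M a ↔ ∃ f : M →ₗ[R] M, (∀ x, f x = 0 ↔ ∃ y, a • y = x) ∧
      (∀ x, (∃ y, f y = x) ↔ a • x = 0) := by
  constructor
  · rintro ⟨e⟩
    refine ⟨(LinearMap.ker (LinearMap.lsmul R M a)).subtype ∘ₗ e.toLinearMap ∘ₗ
      (LinearMap.range (LinearMap.lsmul R M a)).mkQ, fun x => ?_, fun x => ⟨?_, fun hx => ?_⟩⟩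
    · simp
    · rintro ⟨y, rfl⟩
      exact (e _).2
    · obtain ⟨y, hy⟩ := Submodule.mkQ_surjective _ (e.symm ⟨x, hx⟩)
      refine ⟨y, ?_⟩
      simp only [LinearMap.comp_apply, hy]
      simp
  · rintro ⟨f, h1, h2⟩
    have hk : LinearMap.range (LinearMap.lsmul R M a) = LinearMap.ker f := by
      ext x
      simp [h1]
    have hr : LinearMap.range f = LinearMap.ker (LinearMap.lsmul R M a) := by
      ext x
      simp [h2]
    exact ⟨(Submodule.quotEquivOfEq _ _ hk).trans
      (f.quotKerEquivRange.trans (LinearEquiv.ofEq _ _ hr))⟩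

theorem stmt_8 :
    IsWeaklyMorphic (R₁ × R₂) (M₁ × M₂) ↔
      IsWeaklyMorphic R₁ M₁ ∧ IsWeaklyMorphic R₂ M₂ := by
  have hs : ∀ (a : R₁ × R₂) (m : M₁ × M₂), a • m = (a.1 • m.1, a.2 • m.2) := fun _ _ => rfl
  simp only [IsWeaklyMorphic, isAMorphic_iff_aux]
  constructor
  · intro h
    constructor
    · intro a
      obtain ⟨f, h1, h2⟩ := h (a, 0)
      have key : ∀ m : M₁ × M₂, (f (m.1, 0)) = ((f m).1, 0) := by
        intro m
        have := f.map_smul ((1, 0) : R₁ × R₂) m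
        simpa [hs] using this
      refine ⟨{ toFun := fun m => (f (m, 0)).1, map_add' := ?_, map_smul' := ?_ }, ?_, ?_⟩
      · intro x y
        have := f.map_add (x, 0) (y, 0)
        simp only [Prod.mk_add_mk, add_zero] at this
        rw [this]; rfl
      · intro r x
        have := f.map_smul ((r, 0) : R₁ × R₂) (x, 0)
        simp only [hs, smul_zero] at this
        rw [this]; rfl
      · intro x
        have hx := h1 (x, 0)
        have hk := key (x, 0)
        simp only at hk
        rw [hk] at hx
        simpa [hs] using hx
      · intro x
        have hx := h2 (x, 0)
        simp only [hs, zero_smul, Prod.mk_eq_zero, and_true] at hx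
        rw [← hx]
        constructor
        · rintro ⟨y, rfl⟩
          exact ⟨(y, 0), key (y, 0)⟩
        · rintro ⟨y, hy⟩
          refine ⟨y.1, ?_⟩
          change (f (y.1, 0)).1 = x
          rw [key y, hy]
    · intro a
      obtain ⟨f, h1, h2⟩ := h (0, a)
      have key : ∀ m : M₁ × M₂, (f (0, m.2)) = (0, (f m).2) := by
        intro m
        have := f.map_smul ((0, 1) : R₁ × R₂) m
        simpa [hs] using this
      refine ⟨{ toFun := fun m => (f (0, m)).2, map_add' := ?_, map_smul' := ?_ }, ?_, ?_⟩
      · intro x y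
        have := f.map_add (0, x) (0, y)
        simp only [Prod.mk_add_mk, add_zero] at this
        rw [this]; rfl
      · intro r x
        have := f.map_smul ((0, r) : R₁ × R₂) (0, x)
        simp only [hs, smul_zero] at this
        rw [this]; rfl
      · intro x
        have hx := h1 (0, x)
        have hk := key (0, x)
        simp only at hk
        rw [hk] at hx
        simpa [hs] using hx
      · intro x
        have hx := h2 (0, x)
        simp only [hs, zero_smul, Prod.mk_eq_zero, true_and] at hx
        rw [← hx]
        constructor
        · rintro ⟨y, rfl⟩
          exact ⟨(0, y), key (0, y)⟩
        · rintro ⟨y, hy⟩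
          refine ⟨y.2, ?_⟩
          change (f (0, y.2)).2 = x
          rw [key y, hy]
  · rintro ⟨h, h'⟩ ⟨a, b⟩
    obtain ⟨f, f1, f2⟩ := h a
    obtain ⟨g, g1, g2⟩ := h' b
    refine ⟨{ toFun := fun m => (f m.1, g m.2), map_add' := ?_, map_smul' := ?_ }, ?_, ?_⟩
    · intro x y
      simp
    · intro r x
      simp [hs]
    · rintro ⟨x, y⟩
      simp [hs, f1, g1]
    · rintro ⟨x, y⟩
      simp [hs, ← f2, ← g2]

end
end

section
/- Let R be a commutative ring and M an R-module. Then the following are equivalent: (1) for every a ∈ R the endomorphism φ_a is a regular element of End_R(M), i.e. there exists ψ ∈ End_R(M) with φ_a = φ_a ∘ ψ ∘ φ_a; (2) M = aM ⊕ Ann_M(a) (internal direct sum) for every a ∈ R; (3) for every a ∈ R, both aM and Ann_M(a) are direct summands of M. Moreover, each of these conditions implies that M is weakly-morphic. -/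
theorem aux_32 {R : Type*} [CommRing R] {M : Type*} [AddCommGroup M] [Module R M] (a : R)
    (h : (∃ N, IsCompl (LinearMap.range (LinearMap.lsmul R M a)) N) ∧
        ∃ N, IsCompl (LinearMap.ker (LinearMap.lsmul R M a)) N) :
    IsCompl (LinearMap.range (LinearMap.lsmul R M a))
        (LinearMap.ker (LinearMap.lsmul R M a)) := by
  obtain ⟨⟨N, hN⟩, K, hK⟩ := h
  constructor
  · have hle : LinearMap.range (LinearMap.lsmul R M a) ≤ K := by
      rintro _ ⟨x, rfl⟩
      obtain ⟨y, hy, z, hz, rfl⟩ := Submodule.mem_sup.1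
        (hK.sup_eq_top ▸ Submodule.mem_top : x ∈ LinearMap.ker (LinearMap.lsmul R M a) ⊔ K)
      rw [map_add, LinearMap.mem_ker.1 hy, zero_add]
      exact K.smul_mem a hz
    exact hK.disjoint.symm.mono_left hle
  · have hle : N ≤ LinearMap.ker (LinearMap.lsmul R M a) := by
      intro x hx
      exact (Submodule.disjoint_def.1 hN.disjoint) _ ⟨x, rfl⟩ (N.smul_mem a hx)
    exact hN.codisjoint.mono_right hle

theorem aux_21 {R : Type*} [CommRing R] {M : Type*} [AddCommGroup M] [Module R M] (a : R)
    (h : IsCompl (LinearMap.range (LinearMap.lsmul R M a))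
        (LinearMap.ker (LinearMap.lsmul R M a))) :
    ∃ ψ : M →ₗ[R] M,
        LinearMap.lsmul R M a = LinearMap.lsmul R M a ∘ₗ ψ ∘ₗ LinearMap.lsmul R M a := by
  have hb : Function.Bijective
      (LinearMap.lsmul R (LinearMap.range (LinearMap.lsmul R M a)) a) := by
    constructor
    · rw [injective_iff_map_eq_zero]
      rintro ⟨y, hy⟩ h0
      exact Subtype.ext (Submodule.disjoint_def.1 h.disjoint y hy (congrArg Subtype.val h0))
    · rintro ⟨_, x, rfl⟩
      obtain ⟨y, hy, z, hz, rfl⟩ := Submodule.mem_sup.1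
        (h.sup_eq_top ▸ Submodule.mem_top : x ∈ LinearMap.range (LinearMap.lsmul R M a) ⊔
          LinearMap.ker (LinearMap.lsmul R M a))
      refine ⟨⟨y, hy⟩, Subtype.ext ?_⟩
      have hz' : a • z = 0 := hz
      change a • y = a • (y + z)
      rw [smul_add, hz', add_zero]
  let e := LinearEquiv.ofBijective _ hb
  refine ⟨Submodule.subtype _ ∘ₗ e.symm.toLinearMap ∘ₗ Submodule.projectionOnto _ _ h, ?_⟩
  ext x
  have h1 := Submodule.projectionOnto_apply_left h ⟨LinearMap.lsmul R M a x, x, rfl⟩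
  have h2 := congrArg Subtype.val (e.apply_symm_apply ⟨LinearMap.lsmul R M a x, x, rfl⟩)
  simp only [LinearMap.comp_apply]
  erw [h1]
  exact h2.symm

theorem aux_12 {R : Type*} [CommRing R] {M : Type*} [AddCommGroup M] [Module R M] (a : R)
    (h : ∃ ψ : M →ₗ[R] M,
        LinearMap.lsmul R M a = LinearMap.lsmul R M a ∘ₗ ψ ∘ₗ LinearMap.lsmul R M a) :
    IsCompl (LinearMap.range (LinearMap.lsmul R M a))
        (LinearMap.ker (LinearMap.lsmul R M a)) := by
  obtain ⟨ψ, hψ⟩ := h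
  have key : ∀ x, a • x = a • ψ (a • x) := fun x => LinearMap.congr_fun hψ x
  constructor
  · rw [Submodule.disjoint_def]
    rintro _ ⟨x, rfl⟩ hx
    have hx' : a • a • x = 0 := hx
    change a • x = 0
    rw [key, ← map_smul, hx', map_zero]
  · rw [codisjoint_iff, eq_top_iff]
    intro x _
    refine Submodule.mem_sup.2 ⟨a • ψ x, ⟨ψ x, rfl⟩, x - a • ψ x, ?_, by abel⟩
    change a • (x - a • ψ x) = 0
    rw [smul_sub, ← map_smul, ← key, sub_self]

theorem stmt_9 (R : Type*) [CommRing R] (M : Type*) [AddCommGroup M] [Module R M] :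
    ((∀ a : R, ∃ ψ : M →ₗ[R] M,
        LinearMap.lsmul R M a = LinearMap.lsmul R M a ∘ₗ ψ ∘ₗ LinearMap.lsmul R M a) ↔
      (∀ a : R, IsCompl (LinearMap.range (LinearMap.lsmul R M a))
        (LinearMap.ker (LinearMap.lsmul R M a)))) ∧
    ((∀ a : R, IsCompl (LinearMap.range (LinearMap.lsmul R M a))
        (LinearMap.ker (LinearMap.lsmul R M a))) ↔
      (∀ a : R, (∃ N, IsCompl (LinearMap.range (LinearMap.lsmul R M a)) N) ∧
        ∃ N, IsCompl (LinearMap.ker (LinearMap.lsmul R M a)) N)) ∧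
    ((∀ a : R, (∃ N, IsCompl (LinearMap.range (LinearMap.lsmul R M a)) N) ∧
        ∃ N, IsCompl (LinearMap.ker (LinearMap.lsmul R M a)) N) →
      IsWeaklyMorphic R M) := by
  refine ⟨⟨fun h a => aux_12 a (h a), fun h a => aux_21 a (h a)⟩,
    ⟨fun h a => ⟨⟨_, h a⟩, ⟨_, (h a).symm⟩⟩, fun h a => aux_32 a (h a)⟩, fun h a => ?_⟩
  exact ⟨Submodule.quotientEquivOfIsCompl _ _ (aux_32 a (h a))⟩
end

section
/- Let R be a von Neumann regular commutative ring (for every a ∈ R there exists x ∈ R with a = a·x·a). Then every R-module is weakly-morphic. -/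
theorem stmt_10 (R : Type*) [CommRing R] (hreg : ∀ a : R, ∃ x : R, a = a * x * a)
    (M : Type*) [AddCommGroup M] [Module R M] :
    IsWeaklyMorphic R M := by
  intro a
  obtain ⟨x, hx⟩ := hreg a
  refine ⟨Submodule.quotientEquivOfIsCompl _ _ ⟨?_, ?_⟩⟩
  · rw [Submodule.disjoint_def]
    rintro _ ⟨m, rfl⟩ h
    rw [LinearMap.mem_ker] at h
    simp only [LinearMap.lsmul_apply] at h ⊢
    calc a • m = x • a • a • m := by
          rw [smul_smul, smul_smul, mul_comm x a, ← hx]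
      _ = 0 := by rw [h, smul_zero]
  · rw [codisjoint_iff, eq_top_iff]
    intro m _
    rw [Submodule.mem_sup]
    refine ⟨a • x • m, ⟨x • m, rfl⟩, m - a • x • m, ?_, by abel⟩
    rw [LinearMap.mem_ker]
    simp only [LinearMap.lsmul_apply, smul_sub, smul_smul]
    rw [show a * (a * x) = a by rw [mul_comm, ← hx], sub_self]
end

section
/- Let R be a commutative ring and M an R-module that is kernel-direct (the kernel of every R-module endomorphism of M is a direct summand of M) or image-direct (the image of every R-module endomorphism of M is a direct summand of M). Then M is weakly-morphic if and only if M = aM ⊕ Ann_M(a) (internal direct sum) for every a ∈ R. -/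
theorem stmt_11 (R : Type*) [CommRing R] (M : Type*) [AddCommGroup M] [Module R M]
    (hdir : (∀ φ : M →ₗ[R] M, ∃ N, IsCompl (LinearMap.ker φ) N) ∨
      (∀ φ : M →ₗ[R] M, ∃ N, IsCompl (LinearMap.range φ) N)) :
    IsWeaklyMorphic R M ↔
      ∀ a : R, IsCompl (LinearMap.range (LinearMap.lsmul R M a))
        (LinearMap.ker (LinearMap.lsmul R M a)) := by
  constructor
  · intro h a
    obtain ⟨e⟩ := h a
    set f : M →ₗ[R] M := LinearMap.lsmul R M a with hf
    have hfa : ∀ x, f x = a • x := fun x => rfl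
    let ψ : M →ₗ[R] M := (LinearMap.ker f).subtype ∘ₗ e.toLinearMap ∘ₗ (LinearMap.range f).mkQ
    have hker : LinearMap.ker ψ = LinearMap.range f := by
      ext x
      simp only [ψ, LinearMap.mem_ker, LinearMap.comp_apply, Submodule.subtype_apply,
        ZeroMemClass.coe_eq_zero, LinearEquiv.coe_coe, LinearEquiv.map_eq_zero_iff,
        Submodule.mkQ_apply, Submodule.Quotient.mk_eq_zero]
    have hrange : LinearMap.range ψ = LinearMap.ker f := by
      ext x
      constructor
      · rintro ⟨y, rfl⟩
        exact (e ((LinearMap.range f).mkQ y)).2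
      · intro hx
        obtain ⟨y, hy⟩ := (LinearMap.range f).mkQ_surjective (e.symm ⟨x, hx⟩)
        exact ⟨y, by simp only [ψ, LinearMap.comp_apply, hy]; simp⟩
    have key : (∃ L, IsCompl (LinearMap.range f) L) ∧ (∃ N, IsCompl (LinearMap.ker f) N) := by
      rcases hdir with hd | hd
      · exact ⟨hker ▸ hd ψ, hd f⟩
      · exact ⟨hd f, hrange ▸ hd ψ⟩
    obtain ⟨⟨L, hL⟩, N, hN⟩ := key
    have hLK : L ≤ LinearMap.ker f := fun x hx =>
      Submodule.disjoint_def.mp hL.disjoint (f x) ⟨x, rfl⟩ (L.smul_mem a hx)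
    have hRN : LinearMap.range f ≤ N := by
      rintro _ ⟨x, rfl⟩
      have hx : x ∈ LinearMap.ker f ⊔ N := by rw [hN.sup_eq_top]; trivial
      obtain ⟨k, hk, n, hn, rfl⟩ := Submodule.mem_sup.mp hx
      rw [map_add, LinearMap.mem_ker.mp hk, zero_add]
      exact N.smul_mem a hn
    exact ⟨hN.disjoint.symm.mono_left hRN, hL.codisjoint.mono_right hLK⟩
  · intro h a
    exact ⟨Submodule.quotientEquivOfIsCompl _ _ (h a)⟩
end

section
/- Let R be a commutative ring and M an R-module whose endomorphism ring End_R(M) is von Neumann regular (for every φ ∈ End_R(M) there exists ψ ∈ End_R(M) with φ = φ ∘ ψ ∘ φ). Then M is weakly-morphic. -/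
theorem stmt_12 (R : Type*) [CommRing R] (M : Type*) [AddCommGroup M] [Module R M]
    (hreg : ∀ φ : M →ₗ[R] M, ∃ ψ : M →ₗ[R] M, φ = φ ∘ₗ ψ ∘ₗ φ) :
    IsWeaklyMorphic R M := by
  intro a
  obtain ⟨ψ, hψ⟩ := hreg (LinearMap.lsmul R M a)
  have h : ∀ m : M, a • m = a • ψ (a • m) := fun m => by
    simpa using LinearMap.congr_fun hψ m
  refine ⟨Submodule.quotientEquivOfIsCompl _ _ ⟨?_, ?_⟩⟩
  · rw [Submodule.disjoint_def]
    rintro x ⟨m, rfl⟩ hx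
    have hx' : a • a • m = 0 := by simpa using hx
    have h1 : a • m = 0 := by
      rw [h m, ← map_smul, hx', map_zero]
    simpa using h1
  · rw [codisjoint_iff, eq_top_iff]
    rintro m -
    refine Submodule.mem_sup.2 ⟨a • ψ m, ⟨ψ m, by simp⟩, m - a • ψ m, ?_, by abel⟩
    rw [LinearMap.mem_ker, LinearMap.lsmul_apply, smul_sub, ← map_smul, ← h m, sub_self]
end

section
/- Let R be a commutative ring and M an R-module in which every submodule is RD-pure, i.e. for every submodule N of M and every a ∈ R, aN = aM ∩ N. Then M is weakly-morphic (indeed M = aM ⊕ Ann_M(a) for every a ∈ R). -/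
theorem stmt_13 (R : Type*) [CommRing R] (M : Type*) [AddCommGroup M] [Module R M]
    (hRD : ∀ (N : Submodule R M) (a : R),
      Submodule.map (LinearMap.lsmul R M a) N =
        Submodule.map (LinearMap.lsmul R M a) ⊤ ⊓ N) :
    IsWeaklyMorphic R M ∧
      ∀ a : R, IsCompl (LinearMap.range (LinearMap.lsmul R M a))
        (LinearMap.ker (LinearMap.lsmul R M a)) := by
  have key : ∀ a : R, IsCompl (LinearMap.range (LinearMap.lsmul R M a))
      (LinearMap.ker (LinearMap.lsmul R M a)) := by
    intro a
    constructor
    · rw [disjoint_iff, LinearMap.range_eq_map, ← hRD, eq_bot_iff]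
      rintro _ ⟨x, hx, rfl⟩
      exact hx
    · rw [codisjoint_iff, eq_top_iff]
      intro m _
      have h := hRD (LinearMap.range (LinearMap.lsmul R M a)) a
      rw [← LinearMap.range_eq_map, inf_idem] at h
      have hm : LinearMap.lsmul R M a m ∈ LinearMap.range (LinearMap.lsmul R M a) := ⟨m, rfl⟩
      rw [← h] at hm
      obtain ⟨y, hy, hym⟩ := hm
      refine Submodule.mem_sup.2 ⟨y, hy, m - y, ?_, by abel⟩
      rw [LinearMap.mem_ker, map_sub, hym, sub_self]
  exact ⟨fun a => ⟨Submodule.quotientEquivOfIsCompl _ _ (key a)⟩, key⟩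
end

section
/- Let R be a commutative ring and M a finitely generated multiplication R-module (for each submodule N of M there exists an ideal A of R with N = MA). Then M is weakly-morphic if and only if M is morphic. -/
/-- `M` is a morphic module if `M/φ(M) ≅ ker φ` for every endomorphism `φ` of `M`. -/
def IsMorphicModule (R : Type*) [CommRing R] (M : Type*) [AddCommGroup M] [Module R M] : Prop :=
  ∀ φ : M →ₗ[R] M, Nonempty ((M ⧸ LinearMap.range φ) ≃ₗ[R] LinearMap.ker φ)

theorem endo_eq_smul (R : Type*) [CommRing R] (M : Type*) [AddCommGroup M] [Module R M]
    [Module.Finite R M]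
    (hmul : ∀ N : Submodule R M, ∃ A : Ideal R, N = A • (⊤ : Submodule R M))
    (φ : M →ₗ[R] M) : ∃ s : R, LinearMap.lsmul R M s = φ := by
  let I : Ideal R := (Submodule.span R {(LinearMap.id : M →ₗ[R] M)}).comap
    (LinearMap.toSpanSingleton R (M →ₗ[R] M) φ)
  have hI : ∀ r : R, r ∈ I ↔ ∃ s : R, ∀ y, s • y = r • φ y := by
    intro r
    simp only [I, Submodule.mem_comap, LinearMap.toSpanSingleton_apply,
      Submodule.mem_span_singleton, LinearMap.ext_iff, LinearMap.smul_apply, LinearMap.id_apply]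
  have htop : I = ⊤ := by
    by_contra hne
    obtain ⟨m, hm, hle⟩ := Ideal.exists_le_maximal I hne
    by_cases h : (⊤ : Submodule R M) ≤ m • (⊤ : Submodule R M)
    · obtain ⟨r, hr, hr0⟩ :=
        Submodule.exists_sub_one_mem_and_smul_eq_zero_of_fg_of_le_smul m ⊤
          Module.Finite.fg_top h
      have hrI : r ∈ m := hle ((hI r).2 ⟨0, fun y => by
        rw [zero_smul, hr0 _ Submodule.mem_top]⟩)
      apply hm.ne_top
      rw [Ideal.eq_top_iff_one]
      have := m.sub_mem hrI hr
      simpa using this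
    · obtain ⟨x, -, hx⟩ := Set.not_subset.1 h
      obtain ⟨A, hA⟩ := hmul (Submodule.span R {x})
      have hAm : ¬ A ≤ m := fun hAm => hx
        (Submodule.smul_mono_left hAm (hA ▸ Submodule.mem_span_singleton_self x))
      obtain ⟨a, haA, ham⟩ := Set.not_subset.1 hAm
      have hφx : φ x ∈ Submodule.span R {x} := by
        have h1 : φ x ∈ (A • (⊤ : Submodule R M)).map φ :=
          Submodule.mem_map_of_mem (hA ▸ Submodule.mem_span_singleton_self x)
        rw [Submodule.map_smul''] at h1
        rw [hA]
        exact Submodule.smul_mono le_rfl le_top h1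
      obtain ⟨s, hs⟩ := Submodule.mem_span_singleton.1 hφx
      refine ham (hle ((hI a).2 ⟨s * a, fun y => ?_⟩))
      have hay : a • y ∈ Submodule.span R {x} := by
        rw [hA]; exact Submodule.smul_mem_smul haA Submodule.mem_top
      obtain ⟨t, ht⟩ := Submodule.mem_span_singleton.1 hay
      rw [← map_smul, ← ht, map_smul, ← hs, mul_smul, ← ht, smul_comm]
  obtain ⟨s, hs⟩ := (hI 1).1 (htop ▸ Submodule.mem_top)
  exact ⟨s, LinearMap.ext fun y => by simpa using hs y⟩

theorem stmt_14 (R : Type*) [CommRing R] (M : Type*) [AddCommGroup M] [Module R M]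
    [Module.Finite R M]
    (hmul : ∀ N : Submodule R M, ∃ A : Ideal R, N = A • (⊤ : Submodule R M)) :
    IsWeaklyMorphic R M ↔ IsMorphicModule R M := by
  constructor
  · intro h φ
    obtain ⟨s, rfl⟩ := endo_eq_smul R M hmul φ
    exact h s
  · intro h a
    exact h _
end

section
/- Let R be a commutative ring and M an R-module that is a duo module (every submodule N of M is fully invariant, i.e. φ(N) ⊆ N for every R-module endomorphism φ of M) and whose endomorphism ring End_R(M) is von Neumann regular (for every φ there exists ψ with φ = φ ∘ ψ ∘ φ). Then M is morphic. -/
theorem stmt_15 (R : Type*) [CommRing R] (M : Type*) [AddCommGroup M] [Module R M]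
    (hduo : ∀ (N : Submodule R M) (φ : M →ₗ[R] M), N.map φ ≤ N)
    (hreg : ∀ φ : M →ₗ[R] M, ∃ ψ : M →ₗ[R] M, φ = φ ∘ₗ ψ ∘ₗ φ) :
    IsMorphicModule R M := by
  intro φ
  obtain ⟨ψ, h⟩ := hreg φ
  have hs : ∀ (f : M →ₗ[R] M) (m : M), ∃ r : R, r • m = f m := fun f m =>
    Submodule.mem_span_singleton.1
      (hduo (Submodule.span R {m}) f ⟨m, Submodule.mem_span_singleton_self m, rfl⟩)
  have hc : ∀ m, φ (ψ m) = ψ (φ m) := by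
    intro m
    obtain ⟨r, hr⟩ := hs φ m
    obtain ⟨s, hs⟩ := hs ψ m
    rw [← hs, ← hr, map_smul, map_smul, ← hs, ← hr, smul_comm]
  have hp : ∀ m, φ (ψ (φ m)) = φ m := fun m => (LinearMap.congr_fun h m).symm
  have hcompl : IsCompl (LinearMap.range φ) (LinearMap.ker φ) := by
    constructor
    · rw [Submodule.disjoint_def]
      rintro _ ⟨x, rfl⟩ hx
      rw [LinearMap.mem_ker] at hx
      rw [← hp x, hc, hx, map_zero]
    · rw [codisjoint_iff, Submodule.eq_top_iff']
      intro m
      refine Submodule.mem_sup.2 ⟨φ (ψ m), ⟨ψ m, rfl⟩, m - φ (ψ m), ?_, by abel⟩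
      rw [LinearMap.mem_ker, map_sub, hc m, hp, sub_self]
  exact ⟨Submodule.quotientEquivOfIsCompl _ _ hcompl⟩
end

section
/- Let D be a Noetherian integral domain. Then the following are equivalent: (1) D is Artinian; (2) every torsion-free D-module is weakly-morphic; (3) every divisible D-module is weakly-morphic. -/
universe u

theorem aux_bot_iff {R M : Type*} [CommRing R] [AddCommGroup M] [Module R M] {a : R}
    (h : IsAMorphic R M a) :
    LinearMap.range (LinearMap.lsmul R M a) = ⊤ ↔ LinearMap.ker (LinearMap.lsmul R M a) = ⊥ := by
  obtain ⟨e⟩ := h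
  rw [← Submodule.Quotient.subsingleton_iff, ← Submodule.subsingleton_iff_eq_bot]
  exact e.toEquiv.subsingleton_congr

theorem aux_field {R : Type*} [CommRing R] [IsDomain R]
    (hR : ∀ a : R, a ≠ 0 → IsUnit a) (M : Type*) [AddCommGroup M] [Module R M] :
    IsWeaklyMorphic R M := by
  intro a
  by_cases ha : a = 0
  · subst ha
    have h1 : LinearMap.range (LinearMap.lsmul R M (0 : R)) = ⊥ := by simp
    have h2 : LinearMap.ker (LinearMap.lsmul R M (0 : R)) = ⊤ := by simp
    exact ⟨(Submodule.quotEquivOfEqBot _ h1).trans (LinearEquiv.ofTop _ h2).symm⟩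
  · obtain ⟨u, rfl⟩ := hR a ha
    have h1 : LinearMap.range (LinearMap.lsmul R M (u : R)) = ⊤ := by
      rw [LinearMap.range_eq_top]
      intro m
      exact ⟨(↑u⁻¹ : R) • m, by simp [smul_smul]⟩
    have h2 : LinearMap.ker (LinearMap.lsmul R M (u : R)) = ⊥ := by
      rw [LinearMap.ker_eq_bot']
      intro m hm
      have := congrArg (fun x => (↑u⁻¹ : R) • x) hm
      simpa [smul_smul] using this
    have i1 := Submodule.Quotient.subsingleton_iff.2 h1
    have i2 := Submodule.subsingleton_iff_eq_bot.2 h2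
    exact ⟨0⟩

theorem aux_artin {R : Type*} [CommRing R] [IsDomain R]
    (hR : ∀ a : R, a ≠ 0 → IsUnit a) : IsArtinianRing R := by
  letI : Field R := (IsField.toField
    ⟨⟨0, 1, zero_ne_one⟩, mul_comm, fun {a} ha => (hR a ha).exists_right_inv⟩)
  infer_instance

theorem stmt_17 (D : Type u) [CommRing D] [IsDomain D] [IsNoetherianRing D] :
    List.TFAE [IsArtinianRing D,
      ∀ (M : Type u) [AddCommGroup M] [Module D M],
        (∀ (m : M) (a : D), a • m = 0 → m = 0 ∨ a = 0) → IsWeaklyMorphic D M,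
      ∀ (M : Type u) [AddCommGroup M] [Module D M],
        (∀ a : D, a ≠ 0 → LinearMap.range (LinearMap.lsmul D M a) = ⊤) →
          IsWeaklyMorphic D M] := by
  have key : ∀ [IsArtinianRing D] (a : D), a ≠ 0 → IsUnit a := by
    intro _ a ha
    exact IsArtinianRing.isUnit_of_mem_nonZeroDivisors (mem_nonZeroDivisors_of_ne_zero ha)
  tfae_have 1 → 2 := fun h M _ _ _ => aux_field key M
  tfae_have 1 → 3 := fun h M _ _ _ => aux_field key M
  tfae_have 2 → 1 := by
    intro h
    apply aux_artin
    intro a ha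
    have h1 := h D (fun m b hb => (mul_eq_zero.1 hb).symm) a
    have h2 := (aux_bot_iff h1).2 (by
      rw [LinearMap.ker_eq_bot']
      intro m hm
      exact (mul_eq_zero.1 hm).resolve_left ha)
    obtain ⟨b, hb⟩ := LinearMap.range_eq_top.1 h2 1
    exact IsUnit.of_mul_eq_one b hb
  tfae_have 3 → 1 := by
    intro h
    apply aux_artin
    intro a ha
    let K := FractionRing D
    let N : Submodule D K := LinearMap.range (Algebra.linearMap D K)
    have hne : ∀ b : D, b ≠ 0 → algebraMap D K b ≠ 0 := fun b hb => by
      simpa using hb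
    have hdiv : ∀ b : D, b ≠ 0 → LinearMap.range (LinearMap.lsmul D (K ⧸ N) b) = ⊤ := by
      intro b hb
      rw [LinearMap.range_eq_top]
      intro m
      obtain ⟨x, rfl⟩ := Submodule.Quotient.mk_surjective _ m
      refine ⟨Submodule.Quotient.mk ((algebraMap D K b)⁻¹ * x), ?_⟩
      rw [LinearMap.lsmul_apply, ← Submodule.Quotient.mk_smul, Algebra.smul_def,
        mul_inv_cancel_left₀ (hne b hb)]
    have h2 := (aux_bot_iff (h (K ⧸ N) hdiv a)).1 (hdiv a ha)
    rw [LinearMap.ker_eq_bot'] at h2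
    have h3 := h2 (Submodule.Quotient.mk ((algebraMap D K a)⁻¹)) (by
      rw [LinearMap.lsmul_apply, ← Submodule.Quotient.mk_smul, Algebra.smul_def,
        mul_inv_cancel₀ (hne a ha), Submodule.Quotient.mk_eq_zero]
      exact ⟨1, by simp⟩)
    rw [Submodule.Quotient.mk_eq_zero] at h3
    obtain ⟨b, hb⟩ := h3
    refine IsUnit.of_mul_eq_one b (IsFractionRing.injective D K ?_)
    rw [Algebra.linearMap_apply] at hb
    rw [map_mul, hb, mul_inv_cancel₀ (hne a ha), map_one]
  tfae_finish
end

section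
/- A finitely generated ℤ-module M is weakly-morphic if and only if M is finite (as a set). -/
/-- Elementwise reformulation of being `a`-morphic over the integers. -/
def HasDual (G : Type*) [AddCommGroup G] (a : ℤ) : Prop :=
  ∃ b : G →+ G, (∀ x, b x = 0 ↔ ∃ y, a • y = x) ∧ (∀ x, a • x = 0 ↔ ∃ y, b y = x)

theorem HasDual.isAMorphic {M : Type*} [AddCommGroup M] [Module ℤ M] {a : ℤ}
    (h : HasDual M a) : IsAMorphic ℤ M a := by
  obtain rfl : ‹Module ℤ M› = AddCommGroup.toIntModule M := Subsingleton.elim _ _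
  obtain ⟨b, h1, h2⟩ := h
  let f : M →ₗ[ℤ] M := { b with map_smul' := fun c x => by simpa using map_intCast_smul b ℤ ℤ c x }
  have hf : ∀ x, f x = b x := fun _ => rfl
  have e1 : LinearMap.range (LinearMap.lsmul ℤ M a) = LinearMap.ker f := by
    ext x
    rw [LinearMap.mem_ker, hf, h1, LinearMap.mem_range]
    rfl
  have e2 : LinearMap.range f = LinearMap.ker (LinearMap.lsmul ℤ M a) := by
    ext x
    have := h2 x
    rw [LinearMap.mem_ker, LinearMap.lsmul_apply, LinearMap.mem_range]
    simp only [hf]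
    rw [← this]
  exact ⟨(Submodule.quotEquivOfEq _ _ e1).trans
    (f.quotKerEquivRange.trans (LinearEquiv.ofEq _ _ e2))⟩

theorem HasDual.of_equiv {G H : Type*} [AddCommGroup G] [AddCommGroup H] {a : ℤ}
    (e : G ≃+ H) (h : HasDual H a) : HasDual G a := by
  obtain ⟨b, h1, h2⟩ := h
  refine ⟨(e.symm.toAddMonoidHom.comp b).comp e.toAddMonoidHom, fun x => ?_, fun x => ?_⟩
  · have h := h1 (e x)
    simp only [AddMonoidHom.comp_apply, AddEquiv.coe_toAddMonoidHom, map_eq_zero_iff _ e.symm.injective]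
    rw [h]
    constructor
    · rintro ⟨y, hy⟩
      exact ⟨e.symm y, by rw [← map_zsmul, hy]; simp⟩
    · rintro ⟨y, hy⟩
      exact ⟨e y, by rw [← map_zsmul, hy]⟩
  · have h := h2 (e x)
    rw [← map_zsmul, map_eq_zero_iff _ e.injective] at h
    rw [h]
    simp only [AddMonoidHom.comp_apply, AddEquiv.coe_toAddMonoidHom]
    constructor
    · rintro ⟨y, hy⟩
      exact ⟨e.symm y, by simp [hy]⟩
    · rintro ⟨y, hy⟩
      exact ⟨e y, by rw [← hy]; simp⟩

theorem HasDual.pi {ι : Type*} {G : ι → Type*} [∀ i, AddCommGroup (G i)] {a : ℤ}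
    (h : ∀ i, HasDual (G i) a) : HasDual (∀ i, G i) a := by
  choose b h1 h2 using h
  refine ⟨AddMonoidHom.mk' (fun x i => b i (x i)) (fun x y => by ext i; simp), fun x => ?_,
    fun x => ?_⟩
  · simp only [AddMonoidHom.mk'_apply, funext_iff, Pi.zero_apply, h1, Pi.smul_apply]
    exact Classical.skolem
  · simp only [AddMonoidHom.mk'_apply, funext_iff, Pi.zero_apply, h2, Pi.smul_apply]
    exact Classical.skolem

theorem HasDual.cyclic {G : Type*} [AddCommGroup G] [Finite G] [IsAddCyclic G] (a : ℤ) :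
    HasDual G a := by
  let f : G →+ G := zsmulAddGroupHom a
  have hf : ∀ x, f x = a • x := fun _ => rfl
  have c1 := AddSubgroup.card_eq_card_quotient_mul_card_addSubgroup f.ker
  have c2 := AddSubgroup.card_eq_card_quotient_mul_card_addSubgroup f.range
  rw [Nat.card_congr (QuotientAddGroup.quotientKerEquivRange f).toEquiv, c2, mul_comm] at c1
  have c3 : Nat.card (G ⧸ f.range) = Nat.card f.ker :=
    Nat.eq_of_mul_eq_mul_left Nat.card_pos c1
  have : IsAddCyclic (G ⧸ f.range) :=
    isAddCyclic_of_surjective (QuotientAddGroup.mk' f.range) (QuotientAddGroup.mk'_surjective _)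
  have e : (G ⧸ f.range) ≃+ f.ker := addEquivOfAddCyclicCardEq c3
  refine ⟨(f.ker.subtype.comp e.toAddMonoidHom).comp (QuotientAddGroup.mk' f.range),
    fun x => ?_, fun x => ?_⟩
  · simp only [AddMonoidHom.comp_apply, AddEquiv.coe_toAddMonoidHom, AddSubgroup.coe_subtype,
      ZeroMemClass.coe_eq_zero, map_eq_zero_iff _ e.injective, QuotientAddGroup.mk'_apply,
      QuotientAddGroup.eq_zero_iff]
    rfl
  · constructor
    · intro hx
      obtain ⟨y, hy⟩ := QuotientAddGroup.mk'_surjective f.range (e.symm ⟨x, hx⟩)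
      exact ⟨y, by simp only [AddMonoidHom.comp_apply, hy]; simp⟩
    · rintro ⟨y, rfl⟩
      exact (e (QuotientAddGroup.mk' f.range y)).2

theorem HasDual.of_finite (G : Type*) [AddCommGroup G] [Finite G] (a : ℤ) : HasDual G a := by
  classical
  obtain ⟨ι, _, n, hn, ⟨e⟩⟩ := AddCommGroup.equiv_directSum_zmod_of_finite' G
  have : ∀ i, NeZero (n i) := fun i => ⟨by have := hn i; omega⟩
  exact .of_equiv (e.trans (DirectSum.addEquivProd _)) (.pi fun i => .cyclic a)

theorem finite_of_isWeaklyMorphic (M : Type*) [AddCommGroup M] [Module ℤ M] [Module.Finite ℤ M]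
    (h : IsWeaklyMorphic ℤ M) : Finite M := by
  obtain rfl : ‹Module ℤ M› = AddCommGroup.toIntModule M := Subsingleton.elim _ _
  have hT : Finite (Submodule.torsion ℤ M) :=
    @Module.finite_of_fg_torsion _ _ (Submodule.module _) inferInstance Submodule.torsion_isTorsion
  set N := Nat.card (Submodule.torsion ℤ M) with hN
  have hpos : 0 < N := Nat.card_pos
  obtain ⟨e⟩ := h ((N : ℤ) + 1)
  have hker : LinearMap.ker (LinearMap.lsmul ℤ M ((N : ℤ) + 1)) = ⊥ := by
    rw [eq_bot_iff]
    intro x hx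
    rw [LinearMap.mem_ker, LinearMap.lsmul_apply] at hx
    have hxT : x ∈ Submodule.torsion ℤ M :=
      (Submodule.mem_torsion_iff _).2
        ⟨⟨(N : ℤ) + 1, mem_nonZeroDivisors_of_ne_zero (by omega)⟩, hx⟩
    have h0 : N • (⟨x, hxT⟩ : Submodule.torsion ℤ M) = 0 := card_nsmul_eq_zero'
    have h0' : N • x = 0 := congrArg Subtype.val h0
    rw [add_smul, one_smul, Nat.cast_smul_eq_nsmul, h0', zero_add] at hx
    simpa using hx
  have hr : LinearMap.range (LinearMap.lsmul ℤ M ((N : ℤ) + 1)) = ⊤ := by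
    rw [← Submodule.Quotient.subsingleton_iff]
    rw [hker] at e
    exact e.toEquiv.subsingleton
  obtain ⟨r, hr1, hr2⟩ := Submodule.exists_sub_one_mem_and_smul_eq_zero_of_fg_of_le_smul
    (Ideal.span {(N : ℤ) + 1}) (⊤ : Submodule ℤ M) Module.Finite.fg_top (by
      intro x _
      have hx : x ∈ LinearMap.range (LinearMap.lsmul ℤ M ((N : ℤ) + 1)) := hr ▸ trivial
      obtain ⟨y, rfl⟩ := hx
      exact Submodule.smul_mem_smul (Ideal.mem_span_singleton_self _) trivial)
  have hr0 : r ≠ 0 := by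
    rintro rfl
    rw [Ideal.mem_span_singleton, zero_sub, dvd_neg] at hr1
    have := Int.le_of_dvd one_pos hr1
    omega
  exact Module.finite_of_fg_torsion _
    (fun {x} => ⟨⟨r, mem_nonZeroDivisors_of_ne_zero hr0⟩, hr2 x trivial⟩)

theorem stmt_18 (M : Type*) [AddCommGroup M] [Module ℤ M] [Module.Finite ℤ M] :
    IsWeaklyMorphic ℤ M ↔ Finite M := by
  exact ⟨finite_of_isWeaklyMorphic M, fun _ a => (HasDual.of_finite M a).isAMorphic⟩
end

section
/- Let D be a principal ideal domain and M = ⊕_{i∈I} M_i a nonzero direct sum of finitely generated torsion-free D-modules M_i. Then D is a morphic ring if and only if M is a weakly-morphic D-module. -/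
lemma isAMorphic_zero' (D : Type*) [CommRing D] (N : Type*) [AddCommGroup N] [Module D N] :
    IsAMorphic D N 0 := by
  unfold IsAMorphic
  have h1 : LinearMap.range (LinearMap.lsmul D N 0) = ⊥ := by
    rw [map_zero, LinearMap.range_zero]
  have h2 : LinearMap.ker (LinearMap.lsmul D N 0) = ⊤ := by
    rw [map_zero, LinearMap.ker_zero]
  rw [h1, h2]
  exact ⟨(Submodule.quotEquivOfEqBot ⊥ rfl).trans Submodule.topEquiv.symm⟩

lemma isAMorphic_iff' (D : Type*) [CommRing D] (N : Type*) [AddCommGroup N] [Module D N]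
    (h : ∀ (m : N) (a : D), a • m = 0 → m = 0 ∨ a = 0) (a : D) (ha : a ≠ 0) :
    IsAMorphic D N a ↔ ∀ n : N, ∃ m : N, a • m = n := by
  have hk : LinearMap.ker (LinearMap.lsmul D N a) = ⊥ := by
    rw [LinearMap.ker_eq_bot']
    intro m hm
    exact (h m a (by simpa using hm)).resolve_right ha
  have hs : Subsingleton (LinearMap.ker (LinearMap.lsmul D N a)) :=
    (Submodule.subsingleton_iff_eq_bot).2 hk
  constructor
  · rintro ⟨e⟩ n
    have := e.toEquiv.subsingleton
    have h3 := Submodule.Quotient.subsingleton_iff.1 this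
    have : n ∈ LinearMap.range (LinearMap.lsmul D N a) := h3 ▸ Submodule.mem_top
    obtain ⟨m, hm⟩ := this
    exact ⟨m, by simpa using hm⟩
  · intro hn
    have h3 : LinearMap.range (LinearMap.lsmul D N a) = ⊤ := by
      rw [LinearMap.range_eq_top]
      intro n
      obtain ⟨m, hm⟩ := hn n
      exact ⟨m, by simpa using hm⟩
    have := Submodule.Quotient.subsingleton_iff.2 h3
    exact ⟨0⟩

theorem stmt_19 (D : Type*) [CommRing D] [IsDomain D] [IsPrincipalIdealRing D]
    (I : Type*) [DecidableEq I]
    (M : I → Type*) [∀ i, AddCommGroup (M i)] [∀ i, Module D (M i)]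
    [∀ i, Module.Finite D (M i)]
    (htf : ∀ i (m : M i) (a : D), a • m = 0 → m = 0 ∨ a = 0)
    [Nontrivial (DirectSum I M)] :
    (∀ a : D, IsAMorphic D D a) ↔ IsWeaklyMorphic D (DirectSum I M) := by
  have hD : ∀ (m : D) (a : D), a • m = 0 → m = 0 ∨ a = 0 := by
    intro m a h
    exact (mul_eq_zero.1 h).symm
  have hM : ∀ (m : DirectSum I M) (a : D), a • m = 0 → m = 0 ∨ a = 0 := by
    intro m a h
    by_cases ha : a = 0
    · exact Or.inr ha
    · left
      refine DFinsupp.ext fun i => ?_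
      have := DFunLike.congr_fun h i
      exact (htf i (m i) a this).resolve_right ha
  constructor
  · intro h a
    by_cases ha : a = 0
    · subst ha; exact isAMorphic_zero' D _
    · rw [isAMorphic_iff' D _ hM a ha]
      intro n
      obtain ⟨b, hb⟩ := (isAMorphic_iff' D D hD a ha).1 (h a) 1
      refine ⟨b • n, ?_⟩
      rw [smul_smul, ← smul_eq_mul, hb, one_smul]
  · intro h a
    by_cases ha : a = 0
    · subst ha; exact isAMorphic_zero' D _
    · have hdiv := (isAMorphic_iff' D _ hM a ha).1 (h a)
      obtain ⟨x, hx⟩ := exists_ne (0 : DirectSum I M)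
      have : ∃ i, x i ≠ 0 := by
        by_contra hc
        push Not at hc
        exact hx (DFinsupp.ext hc)
      obtain ⟨i, hi⟩ := this
      obtain ⟨r, hr, hr0⟩ :=
        Submodule.exists_sub_one_mem_and_smul_eq_zero_of_fg_of_le_smul (Ideal.span {a})
          (⊤ : Submodule D (M i)) Module.Finite.fg_top (by
            intro n _
            obtain ⟨m, hm⟩ := hdiv (DirectSum.of M i n)
            have h1 := DFunLike.congr_fun hm i
            have h2 : a • m i = n := by
              rw [DirectSum.of_eq_same] at h1
              exact h1
            rw [← h2]
            exact Submodule.smul_mem_smul (Ideal.mem_span_singleton_self a) Submodule.mem_top)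
      have hr1 : r = 0 := (htf i _ r (hr0 _ Submodule.mem_top)).resolve_left hi
      subst hr1
      obtain ⟨c, hc⟩ := Ideal.mem_span_singleton'.1 hr
      rw [isAMorphic_iff' D D hD a ha]
      intro n
      refine ⟨-c * n, ?_⟩
      rw [smul_eq_mul]
      linear_combination (-n) * hc
end
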